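/- Consider the simple-path choice program on a finite complete graph with node set N, |N| ≥ 2, and cost function c : N × N → ℕ. Then in every choice model M of this program there is an enumeration x_1, …, x_n of all the nodes of N such that the s_path-atoms of M are exactly {s_path(root, x_1, 0)} ∪ {s_path(x_i, x_{i+1}, c(x_i, x_{i+1})) : 1 ≤ i < n}; i.e. on a complete graph the program always produces a Hamiltonian path. -/

import Mathlib

/-!
In a stable model `M` the `chosen` atoms of each index are pairwise non-conflicting (`stable_fun`,
`stable_inj`), since a conflicting atom derives the `diffchoice` atom that deletes the corresponding
`chosen` rule from the reduct. Dually, a `chosen` rule whose positive body holds is blocked only by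
an actually chosen conflicting tuple. Hence exactly one start node `x1` is chosen
(`stable_start`), and the relation `E x y`, saying that `chosen1 x y (c x y) ∈ M`, is functional and
injective, never enters `x1`, and has all its sources reachable from `x1` (minimality of `M`).

The rest is a graph argument about `E` (`hamiltonian_of_relation`): take an inextensible
duplicate-free `E`-path from `x1`. It is closed under `E`, hence it contains every reachable node. If
some node `y` were missing, the edge from the last node `e` to `y` would be eligible, so it could only
be blocked by a chosen edge leaving `e` or entering `y`, and neither exists. So the path visits all
nodes, and its steps are exactly the pairs of `E`.
-/

/-- A ground rule: head, positive body, negative body. -/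
structure GroundRule (A : Type) where
  head : A
  pos : Finset A
  neg : Finset A

/-- An interpretation `I` satisfies a ground rule. -/
def satisfiesRule {A : Type} (I : Set A) (r : GroundRule A) : Prop :=
  ((↑r.pos : Set A) ⊆ I ∧ ∀ a ∈ r.neg, a ∉ I) → r.head ∈ I

/-- `I` is a model of the ground program `P`. -/
def isModel {A : Type} (P : Set (GroundRule A)) (I : Set A) : Prop :=
  ∀ r ∈ P, satisfiesRule I r

/-- The immediate consequence operator `T_P`. -/
def TP {A : Type} (P : Set (GroundRule A)) (I : Set A) : Set A :=
  { a | ∃ r ∈ P, r.head = a ∧ (↑r.pos : Set A) ⊆ I ∧ ∀ b ∈ r.neg, b ∉ I }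

/-- The reduct of `P` with respect to `M`. -/
def reduct {A : Type} (P : Set (GroundRule A)) (M : Set A) : Set (GroundRule A) :=
  { r' | ∃ r ∈ P, (∀ b ∈ r.neg, b ∉ M) ∧ r' = ⟨r.head, r.pos, ∅⟩ }

/-- `M` is the least model of `P`. -/
def isLeastModel {A : Type} (P : Set (GroundRule A)) (M : Set A) : Prop :=
  isModel P M ∧ ∀ M', isModel P M' → M ⊆ M'

/-- `M` is a stable model of `P`: it is the least model of the reduct of `P` w.r.t. `M`. -/
def isStableModel {A : Type} (P : Set (GroundRule A)) (M : Set A) : Prop :=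
  isLeastModel (reduct P M) M

/-- Inflationary iteration `F^n(J)` where `F(I) = I ∪ T(I)`. -/
def iterT {A : Type} (T : Set A → Set A) (J : Set A) : ℕ → Set A
  | 0 => J
  | n + 1 => iterT T J n ∪ T (iterT T J n)

/-- `T^{↑ω}(J) = ⋃ₙ Fⁿ(J)` where `F(I) = I ∪ T(I)`. -/
def Tomega {A : Type} (T : Set A → Set A) (J : Set A) : Set A :=
  ⋃ n, iterT T J n

/-- Atoms of the simple-path choice program over a node type `N`; the source of
an `s_path` atom is `Option N`, with `none` playing the role of `root`. -/
inductive SPAtom (N : Type) : Type where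
  | g : N → N → ℕ → SPAtom N
  | spath : Option N → N → ℕ → SPAtom N
  | chosen0 : N → SPAtom N
  | diff0 : N → SPAtom N
  | chosen1 : N → N → ℕ → SPAtom N
  | diff1 : N → N → ℕ → SPAtom N
deriving DecidableEq

variable {N : Type} [DecidableEq N]

/-- Conflict for index 1 tuples `(x,y,k)`: FDs `X → Y`, `Y → X` and `Y → C`. -/
def spConflict1 (t t' : N × N × ℕ) : Prop :=
  (t.1 = t'.1 ∧ t.2.1 ≠ t'.2.1) ∨ (t.2.1 = t'.2.1 ∧ t.1 ≠ t'.1) ∨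
  (t.2.1 = t'.2.1 ∧ t.2.2 ≠ t'.2.2)

/-- `foe` of the simple-path choice program on the complete graph with cost
function `c`: the `g`-facts, the exit and recursive `s_path` rules, the chosen
rules for both choice indices, and the diffchoice rules. -/
def spFoe (c : N → N → ℕ) : Set (GroundRule (SPAtom N)) :=
  { ru | ∃ x y : N, x ≠ y ∧ ru = ⟨SPAtom.g x y (c x y), ∅, ∅⟩ } ∪
  { ru | ∃ x y : N, x ≠ y ∧
      ru = ⟨SPAtom.spath none x 0, {SPAtom.g x y (c x y), SPAtom.chosen0 x}, ∅⟩ } ∪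
  { ru | ∃ (z : Option N) (x y : N) (k' : ℕ) (z0 : N), x ≠ y ∧ y ≠ z0 ∧
      ru = ⟨SPAtom.spath (some x) y (c x y),
            {SPAtom.spath z x k', SPAtom.g x y (c x y), SPAtom.spath none z0 0,
             SPAtom.chosen1 x y (c x y)}, ∅⟩ } ∪
  { ru | ∃ x y : N, x ≠ y ∧
      ru = ⟨SPAtom.chosen0 x, {SPAtom.g x y (c x y)}, {SPAtom.diff0 x}⟩ } ∪
  { ru | ∃ (z : Option N) (x y : N) (k' : ℕ) (z0 : N), x ≠ y ∧ y ≠ z0 ∧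
      ru = ⟨SPAtom.chosen1 x y (c x y),
            {SPAtom.spath z x k', SPAtom.g x y (c x y), SPAtom.spath none z0 0},
            {SPAtom.diff1 x y (c x y)}⟩ } ∪
  { ru | ∃ x x' : N, x ≠ x' ∧ ru = ⟨SPAtom.diff0 x, {SPAtom.chosen0 x'}, ∅⟩ } ∪
  { ru | ∃ t t' : N × N × ℕ, spConflict1 t t' ∧
      ru = ⟨SPAtom.diff1 t.1 t.2.1 t.2.2, {SPAtom.chosen1 t'.1 t'.2.1 t'.2.2}, ∅⟩ }

/-! ### Inextensible paths in a functional and injective relation -/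

/-- On a finite type, a duplicate-free `E`-path from `a` can be chosen so that no edge leaves its
last node for a node outside the path. -/
theorem exists_inextensible_path {V : Type} [Fintype V] (E : V → V → Prop) (a : V) :
    ∃ l : List V, (a :: l).Nodup ∧ (a :: l).IsChain E ∧
      ∀ y, y ∉ a :: l → ¬ E ((a :: l).getLast (by simp)) y := by
  by_contra hcon
  push Not at hcon
  -- Otherwise paths of every length exist, in particular longer than the number of nodes.
  have key : ∀ n : ℕ, ∃ l : List V, (a :: l).Nodup ∧ (a :: l).IsChain E ∧ l.length = n := by
    intro n
    induction n with
    | zero => exact ⟨[], by simp, by simp, rfl⟩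
    | succ n ih =>
      obtain ⟨l, hn, hc, hl⟩ := ih
      obtain ⟨y, hy, hE⟩ := hcon l hn hc
      refine ⟨l ++ [y], ?_, ?_, by simp [hl]⟩
      · rw [← List.cons_append]
        exact hn.append (by simp) (by simpa using hy)
      · rw [← List.cons_append, List.isChain_append]
        refine ⟨hc, by simp, ?_⟩
        intro u hu v hv
        rw [List.getLast?_eq_some_getLast (by simp)] at hu
        simp at hu hv
        subst hv
        rw [← hu]
        exact hE
  obtain ⟨l, hn, -, hl⟩ := key (Fintype.card V)
  have := hn.length_le_card
  simp [hl] at this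

theorem mem_zip_cons_iff {V : Type} (a : V) (l : List V) (x y : V) :
    (x, y) ∈ (a :: l).zip l ↔
      ∃ (i : ℕ) (h : i + 1 < (a :: l).length), (a :: l)[i] = x ∧ (a :: l)[i + 1] = y := by
  rw [List.mem_iff_getElem]
  constructor
  · rintro ⟨i, h, he⟩
    simp only [List.getElem_zip, Prod.mk.injEq] at he
    simp only [List.length_zip, List.length_cons] at h
    exact ⟨i, by simp; omega, he.1, by simpa using he.2⟩
  · rintro ⟨i, h, h1, h2⟩
    simp only [List.length_cons] at h
    refine ⟨i, by simp; omega, ?_⟩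
    simp only [List.getElem_zip, Prod.mk.injEq]
    exact ⟨h1, by simpa using h2⟩

/-- The combinatorial core. `hreach` says that sources of edges are reachable from `x1`, in the form
of an induction principle; `hmax` says that an edge from a visited node `x` to a node `y` other than
`x` and `x1` can be absent only if some edge leaves `x` or enters `y`. -/
theorem hamiltonian_of_relation {V : Type} [DecidableEq V] [Fintype V] (E : V → V → Prop) (x1 : V)
    (hfun : ∀ x y y', E x y → E x y' → y = y') (hinj : ∀ x x' y, E x y → E x' y → x = x')
    (hx1 : ∀ x, ¬ E x x1)
    (hreach : ∀ S : Set V, x1 ∈ S → (∀ x y, x ∈ S → E x y → y ∈ S) → ∀ x y, E x y → x ∈ S)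
    (hmax : ∀ x y, (x = x1 ∨ ∃ z, E z x) → x ≠ y → y ≠ x1 →
      ∃ x' y', E x' y' ∧ (x' = x ∨ y' = y)) :
    ∃ rest : List V, (x1 :: rest).Nodup ∧ (x1 :: rest).toFinset = Finset.univ ∧
      ∀ x y, E x y ↔ (x, y) ∈ (x1 :: rest).zip rest := by
  obtain ⟨l, hn, hc, hl⟩ := exists_inextensible_path E x1
  have hzipE : ∀ x y, (x, y) ∈ (x1 :: l).zip l → E x y := by
    intro x y h
    obtain ⟨i, hi, rfl, rfl⟩ := (mem_zip_cons_iff _ _ _ _).1 h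
    exact List.isChain_iff_getElem.1 hc i hi
  have hpred : ∀ y ∈ x1 :: l, y ≠ x1 → ∃ x, (x, y) ∈ (x1 :: l).zip l := by
    intro y hy hne
    obtain ⟨i, hi, rfl⟩ := List.mem_iff_getElem.1 hy
    cases i with
    | zero => simp at hne
    | succ i => exact ⟨_, (mem_zip_cons_iff _ _ _ _).2 ⟨i, hi, rfl, rfl⟩⟩
  have hEzip : ∀ x y, E x y → y ∈ x1 :: l → (x, y) ∈ (x1 :: l).zip l := by
    intro x y hE hy
    obtain ⟨x', hx'⟩ := hpred y hy (fun h => hx1 x (h ▸ hE))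
    rwa [hinj _ _ _ hE (hzipE _ _ hx')]
  have hclosed : ∀ x y, x ∈ x1 :: l → E x y → y ∈ x1 :: l := by
    intro x y hx hE
    obtain ⟨i, hi, rfl⟩ := List.mem_iff_getElem.1 hx
    by_cases hi' : i + 1 < (x1 :: l).length
    · rw [hfun _ _ _ hE (List.isChain_iff_getElem.1 hc i hi')]
      exact List.getElem_mem _
    · by_contra hy
      refine hl y hy ?_
      rw [List.getLast_eq_getElem]
      have : (x1 :: l).length - 1 = i := by omega
      simpa only [this] using hE
  have hsrc : ∀ x y, E x y → x ∈ x1 :: l := hreach {x | x ∈ x1 :: l} (by simp) hclosed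
  have hall : ∀ y, y ∈ x1 :: l := by
    intro y
    by_contra hy
    set e := (x1 :: l).getLast (by simp) with he
    have hemem : e ∈ x1 :: l := List.getLast_mem _
    have hne : e ≠ y := fun h => hy (h ▸ hemem)
    have hy1 : y ≠ x1 := fun h => hy (by simp [h])
    have hvis : e = x1 ∨ ∃ z, E z e := by
      by_cases h : e = x1
      · exact Or.inl h
      · obtain ⟨z, hz⟩ := hpred e hemem h
        exact Or.inr ⟨z, hzipE _ _ hz⟩
    obtain ⟨x', y', hE, rfl | rfl⟩ := hmax e y hvis hne hy1
    · -- A successor of the last node would lie on the path right after it.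
      obtain ⟨i, hi, h1, -⟩ := (mem_zip_cons_iff _ _ _ _).1 (hEzip _ _ hE (hclosed _ _ hemem hE))
      have h1 := h1.trans he
      rw [List.getLast_eq_getElem] at h1
      have := (hn.getElem_inj_iff).1 h1
      omega
    · exact hy (hclosed _ _ (hsrc _ _ hE) hE)
  refine ⟨l, hn, ?_, fun x y => ⟨fun h => hEzip x y h (hall y), hzipE x y⟩⟩
  ext y
  simpa using hall y

/-! ### Stable models -/

/-- A stable model is closed under the rules not blocked by it. -/
theorem stable_closed {A : Type} {P : Set (GroundRule A)} {M : Set A} (hM : isStableModel P M)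
    {r : GroundRule A} (hr : r ∈ P) (hpos : ∀ a ∈ r.pos, a ∈ M) (hneg : ∀ a ∈ r.neg, a ∉ M) :
    r.head ∈ M :=
  hM.1 ⟨r.head, r.pos, ∅⟩ ⟨r, hr, hneg, rfl⟩ ⟨fun a ha => hpos a ha, by simp⟩

/-- Induction on derivations in the reduct. -/
theorem stable_induction {A : Type} {P : Set (GroundRule A)} {M : Set A} (hM : isStableModel P M)
    (S : Set A)
    (hS : ∀ r ∈ P, (∀ a ∈ r.pos, a ∈ M ∧ a ∈ S) → (∀ a ∈ r.neg, a ∉ M) → r.head ∈ S) :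
    M ⊆ S := by
  have h : M ⊆ M ∩ S := by
    apply hM.2
    rintro _ ⟨r, hr, hneg, rfl⟩ ⟨hpos, -⟩
    exact ⟨stable_closed hM (r := r) hr (fun a ha => (hpos ha).1) hneg, hS r hr (fun a ha => hpos ha) hneg⟩
  exact fun a ha => (h ha).2

theorem stable_supported {A : Type} {P : Set (GroundRule A)} {M : Set A} (hM : isStableModel P M)
    {a : A} (ha : a ∈ M) :
    ∃ r ∈ P, r.head = a ∧ (∀ b ∈ r.pos, b ∈ M) ∧ ∀ b ∈ r.neg, b ∉ M :=
  stable_induction hM {a | ∃ r ∈ P, r.head = a ∧ (∀ b ∈ r.pos, b ∈ M) ∧ ∀ b ∈ r.neg, b ∉ M}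
    (fun r hr hpos hneg => ⟨r, hr, rfl, fun b hb => (hpos b hb).1, hneg⟩) ha

/-! ### Stable models of the simple-path program -/

section
variable {c : N → N → ℕ} {M : Set (SPAtom N)}

theorem stable_g (hM : isStableModel (spFoe c) M) {x y : N} (h : x ≠ y) :
    SPAtom.g x y (c x y) ∈ M := by
  refine stable_closed hM (r := ⟨SPAtom.g x y (c x y), ∅, ∅⟩) ?_ (by simp) (by simp)
  simp only [spFoe, Set.mem_union, Set.mem_ofPred_eq]
  exact Or.inl <| Or.inl <| Or.inl <| Or.inl <| Or.inl <| Or.inl ⟨x, y, h, rfl⟩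

theorem stable_root (hM : isStableModel (spFoe c) M) {x y : N} (h : x ≠ y)
    (hx : SPAtom.chosen0 x ∈ M) : SPAtom.spath none x 0 ∈ M := by
  refine stable_closed hM
    (r := ⟨SPAtom.spath none x 0, {SPAtom.g x y (c x y), SPAtom.chosen0 x}, ∅⟩) ?_
    (by simp [hx, stable_g hM h]) (by simp)
  simp only [spFoe, Set.mem_union, Set.mem_ofPred_eq]
  exact Or.inl <| Or.inl <| Or.inl <| Or.inl <| Or.inl <| Or.inr ⟨x, y, h, rfl⟩

theorem stable_step (hM : isStableModel (spFoe c) M) {z : Option N} {x y : N} {k' : ℕ} {z0 : N}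
    (h : x ≠ y) (h0 : y ≠ z0) (hz : SPAtom.spath z x k' ∈ M) (hz0 : SPAtom.spath none z0 0 ∈ M)
    (hch : SPAtom.chosen1 x y (c x y) ∈ M) : SPAtom.spath (some x) y (c x y) ∈ M := by
  refine stable_closed hM
    (r := ⟨SPAtom.spath (some x) y (c x y), {SPAtom.spath z x k', SPAtom.g x y (c x y),
      SPAtom.spath none z0 0, SPAtom.chosen1 x y (c x y)}, ∅⟩) ?_
    (by simp [hz, hz0, hch, stable_g hM h]) (by simp)
  simp only [spFoe, Set.mem_union, Set.mem_ofPred_eq]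
  exact Or.inl <| Or.inl <| Or.inl <| Or.inl <| Or.inr ⟨z, x, y, k', z0, h, h0, rfl⟩

/-- A `chosen0` rule is blocked only by the choice of a different node. -/
theorem stable_chosen0 (hM : isStableModel (spFoe c) M) {x y : N} (h : x ≠ y) :
    SPAtom.chosen0 x ∈ M ∨ ∃ x', x ≠ x' ∧ SPAtom.chosen0 x' ∈ M := by
  by_cases hd : SPAtom.diff0 x ∈ M
  · obtain ⟨r, hr, hh, hpos, -⟩ := stable_supported hM hd
    rcases hr with (((((⟨_, _, _, rfl⟩ | ⟨_, _, _, rfl⟩) | ⟨_, _, _, _, _, _, _, rfl⟩) |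
      ⟨_, _, _, rfl⟩) | ⟨_, _, _, _, _, _, _, rfl⟩) | ⟨a, b, hab, rfl⟩) | ⟨_, _, _, rfl⟩ <;>
      simp at hh
    subst hh
    exact Or.inr ⟨b, hab, by simpa using hpos⟩
  · left
    refine stable_closed hM
      (r := ⟨SPAtom.chosen0 x, {SPAtom.g x y (c x y)}, {SPAtom.diff0 x}⟩) ?_
      (by simp [stable_g hM h]) (by simpa using hd)
    simp only [spFoe, Set.mem_union, Set.mem_ofPred_eq]
    exact Or.inl <| Or.inl <| Or.inl <| Or.inr ⟨x, y, h, rfl⟩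

theorem stable_chosen0_unique (hM : isStableModel (spFoe c) M) {x x' : N}
    (hx : SPAtom.chosen0 x ∈ M) (hx' : SPAtom.chosen0 x' ∈ M) : x = x' := by
  by_contra hne
  obtain ⟨r, hr, hh, -, hneg⟩ := stable_supported hM hx
  rcases hr with (((((⟨_, _, _, rfl⟩ | ⟨_, _, _, rfl⟩) | ⟨_, _, _, _, _, _, _, rfl⟩) |
    ⟨a, b, hab, rfl⟩) | ⟨_, _, _, _, _, _, _, rfl⟩) | ⟨_, _, _, rfl⟩) | ⟨_, _, _, rfl⟩ <;>
    simp at hh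
  subst hh
  refine hneg (SPAtom.diff0 a) (by simp) ?_
  refine stable_closed hM (r := ⟨SPAtom.diff0 a, {SPAtom.chosen0 x'}, ∅⟩) ?_
    (by simpa using hx') (by simp)
  simp only [spFoe, Set.mem_union, Set.mem_ofPred_eq]
  exact Or.inl <| Or.inr ⟨a, x', hne, rfl⟩

theorem stable_spath_none (hM : isStableModel (spFoe c) M) {x : N} {k : ℕ}
    (hs : SPAtom.spath none x k ∈ M) : k = 0 ∧ SPAtom.chosen0 x ∈ M := by
  obtain ⟨r, hr, hh, hpos, -⟩ := stable_supported hM hs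
  rcases hr with (((((⟨_, _, _, rfl⟩ | ⟨a, b, hab, rfl⟩) | ⟨_, _, _, _, _, _, _, rfl⟩) |
    ⟨_, _, _, rfl⟩) | ⟨_, _, _, _, _, _, _, rfl⟩) | ⟨_, _, _, rfl⟩) | ⟨_, _, _, rfl⟩ <;>
    simp at hh
  obtain ⟨rfl, rfl⟩ := hh
  exact ⟨rfl, hpos _ (by simp)⟩

theorem stable_spath_some (hM : isStableModel (spFoe c) M) {x y : N} {k : ℕ}
    (hs : SPAtom.spath (some x) y k ∈ M) : k = c x y ∧ SPAtom.chosen1 x y (c x y) ∈ M := by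
  obtain ⟨r, hr, hh, hpos, -⟩ := stable_supported hM hs
  rcases hr with (((((⟨_, _, _, rfl⟩ | ⟨_, _, _, rfl⟩) | ⟨z, a, b, k', z0, hab, hb, rfl⟩) |
    ⟨_, _, _, rfl⟩) | ⟨_, _, _, _, _, _, _, rfl⟩) | ⟨_, _, _, rfl⟩) | ⟨_, _, _, rfl⟩ <;>
    simp at hh
  obtain ⟨rfl, rfl, rfl⟩ := hh
  exact ⟨rfl, hpos _ (by simp)⟩

theorem stable_chosen1 (hM : isStableModel (spFoe c) M) {x y : N} {k : ℕ}
    (hs : SPAtom.chosen1 x y k ∈ M) :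
    k = c x y ∧ x ≠ y ∧ SPAtom.diff1 x y k ∉ M ∧
      ∃ z k' z0, y ≠ z0 ∧ SPAtom.spath z x k' ∈ M ∧ SPAtom.spath none z0 0 ∈ M := by
  obtain ⟨r, hr, hh, hpos, hneg⟩ := stable_supported hM hs
  rcases hr with (((((⟨_, _, _, rfl⟩ | ⟨_, _, _, rfl⟩) | ⟨_, _, _, _, _, _, _, rfl⟩) |
    ⟨_, _, _, rfl⟩) | ⟨z, a, b, k', z0, hab, hb, rfl⟩) | ⟨_, _, _, rfl⟩) | ⟨_, _, _, rfl⟩ <;>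
    simp at hh
  obtain ⟨rfl, rfl, rfl⟩ := hh
  exact ⟨rfl, hab, hneg _ (by simp), z, k', z0, hb, hpos _ (by simp), hpos _ (by simp)⟩

theorem stable_no_conflict (hM : isStableModel (spFoe c) M) {t t' : N × N × ℕ}
    (ht : SPAtom.chosen1 t.1 t.2.1 t.2.2 ∈ M) (ht' : SPAtom.chosen1 t'.1 t'.2.1 t'.2.2 ∈ M) :
    ¬ spConflict1 t t' := by
  intro hcf
  refine (stable_chosen1 hM ht).2.2.1 ?_
  refine stable_closed hM
    (r := ⟨SPAtom.diff1 t.1 t.2.1 t.2.2, {SPAtom.chosen1 t'.1 t'.2.1 t'.2.2}, ∅⟩) ?_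
    (by simpa using ht') (by simp)
  simp only [spFoe, Set.mem_union, Set.mem_ofPred_eq]
  exact Or.inr ⟨t, t', hcf, rfl⟩

theorem stable_fun (hM : isStableModel (spFoe c) M) {x y y' : N} {k k' : ℕ}
    (h : SPAtom.chosen1 x y k ∈ M) (h' : SPAtom.chosen1 x y' k' ∈ M) : y = y' := by
  by_contra hne
  exact stable_no_conflict hM (t := (x, y, k)) (t' := (x, y', k')) h h' (Or.inl ⟨rfl, hne⟩)

theorem stable_inj (hM : isStableModel (spFoe c) M) {x x' y : N} {k k' : ℕ}
    (h : SPAtom.chosen1 x y k ∈ M) (h' : SPAtom.chosen1 x' y k' ∈ M) : x = x' := by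
  by_contra hne
  exact stable_no_conflict hM (t := (x, y, k)) (t' := (x', y, k')) h h'
    (Or.inr (Or.inl ⟨rfl, hne⟩))

/-- An eligible edge is either chosen or blocked by a chosen edge sharing its source or target. -/
theorem stable_max (hM : isStableModel (spFoe c) M) {z : Option N} {x y : N} {k' : ℕ} {z0 : N}
    (h : x ≠ y) (h0 : y ≠ z0) (hz : SPAtom.spath z x k' ∈ M) (hz0 : SPAtom.spath none z0 0 ∈ M) :
    ∃ x' y', SPAtom.chosen1 x' y' (c x' y') ∈ M ∧ (x' = x ∨ y' = y) := by
  by_cases hd : SPAtom.diff1 x y (c x y) ∈ M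
  · obtain ⟨r, hr, hh, hpos, -⟩ := stable_supported hM hd
    rcases hr with (((((⟨_, _, _, rfl⟩ | ⟨_, _, _, rfl⟩) | ⟨_, _, _, _, _, _, _, rfl⟩) |
      ⟨_, _, _, rfl⟩) | ⟨_, _, _, _, _, _, _, rfl⟩) | ⟨_, _, _, rfl⟩) |
      ⟨⟨a, b, k⟩, ⟨a', b', k''⟩, hcf, rfl⟩ <;> simp at hh
    obtain ⟨rfl, rfl, rfl⟩ := hh
    have hch : SPAtom.chosen1 a' b' k'' ∈ M := by simpa using hpos
    have hk := (stable_chosen1 hM hch).1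
    subst hk
    refine ⟨a', b', hch, ?_⟩
    rcases hcf with ⟨h1, -⟩ | ⟨h1, -⟩ | ⟨h1, -⟩
    · exact Or.inl h1.symm
    · exact Or.inr h1.symm
    · exact Or.inr h1.symm
  · refine ⟨x, y, ?_, Or.inl rfl⟩
    refine stable_closed hM
      (r := ⟨SPAtom.chosen1 x y (c x y), {SPAtom.spath z x k', SPAtom.g x y (c x y),
        SPAtom.spath none z0 0}, {SPAtom.diff1 x y (c x y)}⟩) ?_
      (by simp [hz, hz0, stable_g hM h]) (by simpa using hd)
    simp only [spFoe, Set.mem_union, Set.mem_ofPred_eq]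
    exact Or.inl <| Or.inl <| Or.inr ⟨z, x, y, k', z0, h, h0, rfl⟩

/-- There is exactly one start node. -/
theorem stable_start [Fintype N] (hcard : 2 ≤ Fintype.card N) (hM : isStableModel (spFoe c) M) :
    ∃ x1, ∀ x k, SPAtom.spath none x k ∈ M ↔ x = x1 ∧ k = 0 := by
  have : Nontrivial N := Fintype.one_lt_card_iff_nontrivial.1 hcard
  obtain ⟨u, v, huv⟩ := exists_pair_ne N
  obtain ⟨x1, hx1⟩ : ∃ x1, SPAtom.chosen0 x1 ∈ M := by
    rcases stable_chosen0 hM huv with h | ⟨x', -, h⟩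
    exacts [⟨_, h⟩, ⟨_, h⟩]
  refine ⟨x1, fun x k => ⟨fun h => ?_, ?_⟩⟩
  · obtain ⟨rfl, hx⟩ := stable_spath_none hM h
    exact ⟨stable_chosen0_unique hM hx hx1, rfl⟩
  · rintro ⟨rfl, rfl⟩
    obtain ⟨w, hw⟩ := exists_ne x
    exact stable_root hM hw.symm hx1

end

/-- on a finite complete graph with at least two nodes, in every
choice model `M` of the simple-path program there is an enumeration
`x₁, …, xₙ` of all the nodes such that the `s_path`-atoms of `M` are exactly
`{s_path(root,x₁,0)} ∪ {s_path(xᵢ,xᵢ₊₁,c(xᵢ,xᵢ₊₁)) : 1 ≤ i < n}`: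
the program produces a Hamiltonian path. -/
theorem simple_path_choice_model_is_hamiltonian
    [Fintype N] (hcard : 2 ≤ Fintype.card N) (c : N → N → ℕ)
    (M : Set (SPAtom N)) (hM : isStableModel (spFoe c) M) :
    ∃ (x1 : N) (rest : List N), (x1 :: rest).Nodup ∧
      (x1 :: rest).toFinset = Finset.univ ∧
      { q : Option N × N × ℕ | SPAtom.spath q.1 q.2.1 q.2.2 ∈ M } =
        insert ((none : Option N), x1, 0)
          { q | ∃ p ∈ (x1 :: rest).zip rest, q = (some p.1, p.2, c p.1 p.2) } := by
  obtain ⟨x1, hroot⟩ := stable_start hcard hM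
  have hr1 : SPAtom.spath none x1 0 ∈ M := (hroot x1 0).2 ⟨rfl, rfl⟩
  have hE : ∀ x y, SPAtom.chosen1 x y (c x y) ∈ M →
      y ≠ x1 ∧ SPAtom.spath (some x) y (c x y) ∈ M := by
    intro x y h
    obtain ⟨-, hxy, -, z, k', z0, hy, hz, hz0⟩ := stable_chosen1 hM h
    obtain ⟨rfl, -⟩ := (hroot _ _).1 hz0
    exact ⟨hy, stable_step hM hxy hy hz hr1 h⟩
  obtain ⟨rest, hn, hu, hzip⟩ := hamiltonian_of_relation
    (fun x y => SPAtom.chosen1 x y (c x y) ∈ M) x1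
    (fun x y y' h h' => stable_fun hM h h') (fun x x' y h h' => stable_inj hM h h')
    (fun x h => (hE _ _ h).1 rfl)
    (by
      intro S h1 hS x y hxy
      obtain ⟨-, -, -, z, k', -, -, hz, -⟩ := stable_chosen1 hM hxy
      -- By induction on derivations, every target of an `spath` atom lies in `S`.
      have hind := stable_induction hM {a | ∀ z v k, a = SPAtom.spath z v k → v ∈ S} (by
        intro r hr hpos hneg z v k hh
        -- Only the exit and the recursive `spath` rules have a head of this form.
        rcases id hr with (((((⟨_, _, _, rfl⟩ | ⟨a, b, hab, rfl⟩) |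
          ⟨w, a, b, k', z0, hab, hb, rfl⟩) | ⟨_, _, _, rfl⟩) | ⟨_, _, _, _, _, _, _, rfl⟩) |
          ⟨_, _, _, rfl⟩) | ⟨_, _, _, rfl⟩ <;> simp at hh
        · obtain ⟨rfl, rfl, rfl⟩ := hh
          have hs := stable_closed hM hr (fun a ha => (hpos a ha).1) hneg
          rw [((hroot _ _).1 hs).1]
          exact h1
        · obtain ⟨rfl, rfl, rfl⟩ := hh
          exact hS a b ((hpos (SPAtom.spath w a k') (by simp)).2 _ _ _ rfl)
            (hpos (SPAtom.chosen1 a b (c a b)) (by simp)).1)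
      exact hind hz _ _ _ rfl)
    (by
      rintro x y (rfl | ⟨z, hz⟩) hxy hy
      · exact stable_max hM hxy hy hr1 hr1
      · exact stable_max hM hxy hy (hE _ _ hz).2 hr1)
  refine ⟨x1, rest, hn, hu, ?_⟩
  ext ⟨z, y, k⟩
  simp only [Set.mem_ofPred_eq, Set.mem_insert_iff, Prod.mk.injEq, Prod.exists]
  cases z with
  | none => simp [hroot]
  | some x =>
    constructor
    · intro h
      obtain ⟨rfl, hch⟩ := stable_spath_some hM h
      exact Or.inr ⟨x, y, (hzip x y).1 hch, rfl, rfl, rfl⟩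
    · rintro (h | ⟨a, b, hab, hx, rfl, rfl⟩)
      · simp at h
      · obtain rfl : x = a := by simpa using hx
        exact (hE _ _ ((hzip x y).2 hab)).2
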